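/- arXiv:2510.25482 — 2 statements merged into one kernel-verified Lean document; each statement's English description precedes it below -/
import Mathlib

section
/- For all integers j, k ≥ 0 and every μ ∈ ℂ, the congruence orbit of the skew-symmetric pencil M_j ⊕ H_{k+1}(μ) is contained in the closure of the congruence orbit of the skew-symmetric pencil M_{j+1} ⊕ H_k(μ) (both pencils have size (2j+2k+3) × (2j+2k+3)). -/
/-!
Basic framework: a complex `m × n` matrix pencil `A - λ B` is formalized as the
pair `(A, B)` of matrices.  We define strict equivalence, congruence,
skew-symmetry, orbits, direct sums, and the cover relations for the orbit
closure hierarchies (in the Euclidean topology).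
-/

open Matrix

noncomputable section

/-- An `m × n` complex matrix pencil `A - λ B`, formalized as the pair `(A, B)`. -/
abbrev Pencil (m n : ℕ) : Type :=
  Matrix (Fin m) (Fin n) ℂ × Matrix (Fin m) (Fin n) ℂ

namespace Pencil

/-- Strict equivalence of matrix pencils: `Q⁻¹ * A * R = C` and `Q⁻¹ * B * R = D`
for some invertible `Q`, `R`. -/
def StrictEquiv {m n : ℕ} (P Q : Pencil m n) : Prop :=
  ∃ (S : Matrix (Fin m) (Fin m) ℂ) (R : Matrix (Fin n) (Fin n) ℂ),
    IsUnit S ∧ IsUnit R ∧ S⁻¹ * P.1 * R = Q.1 ∧ S⁻¹ * P.2 * R = Q.2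

/-- The strict-equivalence orbit of a pencil. -/
def orbE {m n : ℕ} (P : Pencil m n) : Set (Pencil m n) :=
  {Q | StrictEquiv P Q}

/-- A pencil `A - λ B` is skew-symmetric if `Aᵀ = -A` and `Bᵀ = -B`. -/
def IsSkew {n : ℕ} (P : Pencil n n) : Prop :=
  P.1ᵀ = -P.1 ∧ P.2ᵀ = -P.2

/-- Congruence of (square) matrix pencils: `Sᵀ * A * S = C` and `Sᵀ * B * S = D`
for some invertible `S`. -/
def Congruent {n : ℕ} (P Q : Pencil n n) : Prop :=
  ∃ S : Matrix (Fin n) (Fin n) ℂ,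
    IsUnit S ∧ Sᵀ * P.1 * S = Q.1 ∧ Sᵀ * P.2 * S = Q.2

/-- The congruence orbit of a pencil. -/
def orbC {n : ℕ} (P : Pencil n n) : Set (Pencil n n) :=
  {Q | Congruent P Q}

/-- Direct (block-diagonal) sum of two pencils. -/
def dsum {m n p q : ℕ} (P : Pencil m n) (Q : Pencil p q) : Pencil (m + p) (n + q) :=
  ((fromBlocks P.1 0 0 Q.1).submatrix finSumFinEquiv.symm finSumFinEquiv.symm,
   (fromBlocks P.2 0 0 Q.2).submatrix finSumFinEquiv.symm finSumFinEquiv.symm)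

/-- Transport a pencil along equalities of its dimensions. -/
def cast {m n m' n' : ℕ} (hm : m = m') (hn : n = n') (P : Pencil m n) : Pencil m' n' :=
  (P.1.submatrix (finCongr hm.symm) (finCongr hn.symm),
   P.2.submatrix (finCongr hm.symm) (finCongr hn.symm))

/-- `orbE P1` covers `orbE P2` in the closure hierarchy of strict-equivalence
orbits: `P1` is not strictly equivalent to `P2`, `orbE P2 ⊆ closure (orbE P1)`,
and there is no intermediate orbit strictly between them. -/
def CoversE {m n : ℕ} (P1 P2 : Pencil m n) : Prop :=
  ¬ StrictEquiv P1 P2 ∧ orbE P2 ⊆ closure (orbE P1) ∧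
    ¬ ∃ P : Pencil m n, ¬ StrictEquiv P P1 ∧ ¬ StrictEquiv P P2 ∧
        orbE P ⊆ closure (orbE P1) ∧ orbE P2 ⊆ closure (orbE P)

/-- `orbC P1` covers `orbC P2` in the closure hierarchy of congruence orbits of
skew-symmetric pencils: `P1` is not congruent to `P2`,
`orbC P2 ⊆ closure (orbC P1)`, and there is no congruence orbit of a
skew-symmetric pencil strictly between them. -/
def CoversC {n : ℕ} (P1 P2 : Pencil n n) : Prop :=
  ¬ Congruent P1 P2 ∧ orbC P2 ⊆ closure (orbC P1) ∧
    ¬ ∃ P : Pencil n n, IsSkew P ∧ ¬ Congruent P P1 ∧ ¬ Congruent P P2 ∧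
        orbC P ⊆ closure (orbC P1) ∧ orbC P2 ⊆ closure (orbC P)

end Pencil

/-! Canonical building blocks. -/

/-- The `k × k` Jordan block `J_k(μ)`. -/
def Jmat (k : ℕ) (μ : ℂ) : Matrix (Fin k) (Fin k) ℂ :=
  Matrix.of fun i j => if (j : ℕ) = (i : ℕ) then μ else if (j : ℕ) = (i : ℕ) + 1 then 1 else 0

/-- The `k × (k+1)` matrix `F_k` with ones on the superdiagonal. -/
def Fmat (k : ℕ) : Matrix (Fin k) (Fin (k + 1)) ℂ :=
  Matrix.of fun i j => if (j : ℕ) = (i : ℕ) + 1 then 1 else 0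

/-- The `k × (k+1)` matrix `G_k` with ones on the diagonal. -/
def Gmat (k : ℕ) : Matrix (Fin k) (Fin (k + 1)) ℂ :=
  Matrix.of fun i j => if (j : ℕ) = (i : ℕ) then 1 else 0

/-- The Kronecker block `E_k(μ) = J_k(μ) - λ I_k`. -/
def Eblk (k : ℕ) (μ : ℂ) : Pencil k k := (Jmat k μ, 1)

/-- The Kronecker block `E_k(∞) = I_k - λ J_k(0)`. -/
def EInfblk (k : ℕ) : Pencil k k := (1, Jmat k 0)

/-- The Kronecker block `L_k = F_k - λ G_k`. -/
def Lblk (k : ℕ) : Pencil k (k + 1) := (Fmat k, Gmat k)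

/-- The Kronecker block `L_kᵀ = F_kᵀ - λ G_kᵀ`. -/
def LTblk (k : ℕ) : Pencil (k + 1) k := ((Fmat k)ᵀ, (Gmat k)ᵀ)

/-- The skew-symmetric matrix `[[0, X], [-Xᵀ, 0]]`. -/
def skewPair {p q : ℕ} (X : Matrix (Fin p) (Fin q) ℂ) :
    Matrix (Fin (p + q)) (Fin (p + q)) ℂ :=
  (fromBlocks 0 X (-Xᵀ) 0).submatrix finSumFinEquiv.symm finSumFinEquiv.symm

/-- The skew-symmetric canonical block `H_h(μ)` (size `2h × 2h`). -/
def Hblk (h : ℕ) (μ : ℂ) : Pencil (h + h) (h + h) :=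
  (skewPair (Jmat h μ), skewPair (1 : Matrix (Fin h) (Fin h) ℂ))

/-- The skew-symmetric canonical block `K_k = H_k(∞)` (size `2k × 2k`). -/
def Kblk (k : ℕ) : Pencil (k + k) (k + k) :=
  (skewPair (1 : Matrix (Fin k) (Fin k) ℂ), skewPair (Jmat k 0))

/-- The skew-symmetric canonical block `M_m` (size `(2m+1) × (2m+1)`). -/
def Mblk (m : ℕ) : Pencil (m + (m + 1)) (m + (m + 1)) :=
  (skewPair (Fmat m), skewPair (Gmat m))

open Filter Topology

namespace Pencil

/-- The block skew-symmetric matrix `[[0, X], [-Xᵀ, 0]]` over arbitrary index types. -/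
def skewBlock {r c : Type*} (X : Matrix r c ℂ) : Matrix (r ⊕ c) (r ⊕ c) ℂ :=
  fromBlocks 0 X (-Xᵀ) 0

/-- Strictly equivalent matrices have congruent skew-symmetric blocks. -/
theorem skewBlock_congruence {r c : Type*} [Fintype r] [Fintype c] [DecidableEq c]
    {X Y : Matrix r c ℂ} {L : Matrix r r ℂ} {R : Matrix c c ℂ} (hR : IsUnit R.det)
    (h : Y * R = L * X) :
    (fromBlocks Lᵀ 0 0 R⁻¹)ᵀ * skewBlock X * fromBlocks Lᵀ 0 0 R⁻¹ = skewBlock Y := by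
  have hY : L * X * R⁻¹ = Y := by
    rw [← h, Matrix.mul_assoc, Matrix.mul_nonsing_inv _ hR, Matrix.mul_one]
  simp only [skewBlock, fromBlocks_transpose, fromBlocks_multiply]
  simp [← hY, Matrix.transpose_mul, Matrix.mul_assoc]

/-- If skew-symmetric blocks of pencils strictly equivalent to `(X₁, X₂)` accumulate at
`(Y₁, Y₂)`, the congruence orbit of the latter is in the closure of the orbit of the former. -/
theorem orbC_subset_closure_of_tendsto {N : ℕ} {r c : Type*} [Fintype r] [Fintype c]
    [DecidableEq r] [DecidableEq c] (f g : Fin N ≃ r ⊕ c) {X₁ X₂ : Matrix r c ℂ}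
    {Y₁ Y₂ : ℂ → Matrix r c ℂ} (hY₁ : Continuous Y₁) (hY₂ : Continuous Y₂)
    (h : ∀ ε : ℂ, ε ≠ 0 → ∃ (L : Matrix r r ℂ) (R : Matrix c c ℂ), IsUnit L.det ∧ IsUnit R.det ∧
      Y₁ ε * R = L * X₁ ∧ Y₂ ε * R = L * X₂) :
    orbC ((skewBlock (Y₁ 0)).submatrix g g, (skewBlock (Y₂ 0)).submatrix g g) ⊆
      closure (orbC ((skewBlock X₁).submatrix f f, (skewBlock X₂).submatrix f f)) := by
  rintro ⟨Q₁, Q₂⟩ ⟨S, hS, rfl, rfl⟩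
  let q : ℂ → Pencil N N := fun ε =>
    (Sᵀ * (skewBlock (Y₁ ε)).submatrix g g * S, Sᵀ * (skewBlock (Y₂ ε)).submatrix g g * S)
  have hq : Continuous q := by
    have hskew {Y : ℂ → Matrix r c ℂ} (hY : Continuous Y) :
        Continuous fun ε => Sᵀ * (skewBlock (Y ε)).submatrix g g * S :=
      (continuous_const.matrix_mul ((Continuous.matrix_fromBlocks continuous_const hY
        hY.matrix_transpose.neg continuous_const).matrix_submatrix g g)).matrix_mul
        continuous_const
    exact (hskew hY₁).prodMk (hskew hY₂)
  have hlim : Tendsto q (𝓝[≠] 0) (𝓝 (q 0)) := hq.continuousAt.tendsto.mono_left nhdsWithin_le_nhds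
  refine mem_closure_of_tendsto hlim ?_
  filter_upwards [self_mem_nhdsWithin] with ε hε
  obtain ⟨L, R, hL, hR, h₁, h₂⟩ := h ε hε
  have hT : IsUnit (fromBlocks Lᵀ 0 0 R⁻¹ : Matrix (r ⊕ c) (r ⊕ c) ℂ) := by
    rw [Matrix.isUnit_iff_isUnit_det, det_fromBlocks_zero₂₁, det_transpose]
    exact hL.mul (isUnit_nonsing_inv_det R hR)
  refine ⟨(fromBlocks Lᵀ 0 0 R⁻¹).submatrix f g * S,
    ((isUnit_submatrix_equiv f g).2 hT).mul hS, ?_, ?_⟩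
  · simp only [q, ← skewBlock_congruence hR h₁, Matrix.transpose_mul, transpose_submatrix,
      ← Matrix.submatrix_mul_equiv _ _ g f g, ← Matrix.submatrix_mul_equiv _ _ f f g,
      Matrix.mul_assoc]
  · simp only [q, ← skewBlock_congruence hR h₂, Matrix.transpose_mul, transpose_submatrix,
      ← Matrix.submatrix_mul_equiv _ _ g f g, ← Matrix.submatrix_mul_equiv _ _ f f g,
      Matrix.mul_assoc]

/-- The reindexing that gathers the rows and the columns of two skew-symmetric blocks. -/
def gather {p q p' q' N : ℕ} (h : N = p + q + (p' + q')) :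
    Fin N ≃ (Fin p ⊕ Fin p') ⊕ (Fin q ⊕ Fin q') :=
  ((finCongr h).trans (finSumFinEquiv.symm.trans
    (finSumFinEquiv.symm.sumCongr finSumFinEquiv.symm))).trans (Equiv.sumSumSumComm _ _ _ _)

theorem cast_dsum_skewPair {p q p' q' N : ℕ} (h : p + q + (p' + q') = N)
    (A B : Matrix (Fin p) (Fin q) ℂ) (C D : Matrix (Fin p') (Fin q') ℂ) :
    cast h h (dsum (skewPair A, skewPair B) (skewPair C, skewPair D)) =
      ((skewBlock (fromBlocks A 0 0 C)).submatrix (gather h.symm) (gather h.symm),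
       (skewBlock (fromBlocks B 0 0 D)).submatrix (gather h.symm) (gather h.symm)) := by
  have key (X : Matrix (Fin p) (Fin q) ℂ) (Y : Matrix (Fin p') (Fin q') ℂ) :
      (fromBlocks (skewPair X) 0 0 (skewPair Y)).submatrix
          (finSumFinEquiv.symm ∘ finCongr h.symm) (finSumFinEquiv.symm ∘ finCongr h.symm) =
        (skewBlock (fromBlocks X 0 0 Y)).submatrix (gather h.symm) (gather h.symm) := by
    ext a b
    simp only [submatrix_apply, gather, Equiv.trans_apply, Function.comp_apply]
    generalize finSumFinEquiv.symm (finCongr h.symm a) = a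
    generalize finSumFinEquiv.symm (finCongr h.symm b) = b
    rcases a with a | a <;> rcases b with b | b <;>
      simp only [Equiv.sumCongr_apply, Sum.map_inl, Sum.map_inr, skewPair, skewBlock,
        fromBlocks_apply₁₁, fromBlocks_apply₁₂, fromBlocks_apply₂₁, fromBlocks_apply₂₂,
        submatrix_apply] <;>
      generalize finSumFinEquiv.symm a = a <;>
      generalize finSumFinEquiv.symm b = b <;>
      rcases a with a | a <;> rcases b with b | b <;> simp
  exact Prod.ext (key A C) (key B D)

/-- The bijection moving the first index of the second block to the front of the first block. -/
def moveFirst (j k : ℕ) : Fin j ⊕ Fin (k + 1) ≃ Fin (j + 1) ⊕ Fin k where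
  toFun := Sum.elim (fun i => .inl i.succ) (Fin.cases (.inl 0) .inr)
  invFun := Sum.elim (Fin.cases (.inr 0) .inl) (fun i => .inr i.succ)
  left_inv := by
    rintro (i | i)
    · simp
    · cases i using Fin.cases <;> simp
  right_inv := by
    rintro (i | i)
    · cases i using Fin.cases <;> simp
    · simp

/-- The deformation of `F_m` with first row `(μ, ε, 0, …, 0)`. -/
def deformedF (m : ℕ) (μ ε : ℂ) : Matrix (Fin m) (Fin (m + 1)) ℂ :=
  of fun i j => (if (j : ℕ) = i + 1 then (if (i : ℕ) = 0 then ε else 1) else 0) +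
    if (i : ℕ) = 0 ∧ (j : ℕ) = 0 then μ else 0

/-- The row vector `(1, 0, …, 0)`. -/
def firstRow (k : ℕ) : Fin k → ℂ := fun b => if (b : ℕ) = 0 then 1 else 0

/-- The matrix with first row `(1, 0, …, 0)` and all other rows zero. -/
def corner (m k : ℕ) : Matrix (Fin m) (Fin k) ℂ :=
  of fun i => if (i : ℕ) = 0 then firstRow k else 0

/-- The first coefficient of a family of pencils that are strictly equivalent to
`L_m ⊕ E_k(μ)` for `ε ≠ 0` and, for `m > 0`, to `L_{m-1} ⊕ E_{k+1}(μ)` for `ε = 0`. -/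
def deformedA (m k : ℕ) (μ ε : ℂ) : Matrix (Fin m ⊕ Fin k) (Fin (m + 1) ⊕ Fin k) ℂ :=
  fromBlocks (deformedF m μ ε) (corner m k) 0 (Jmat k μ)

theorem continuous_deformedA (m k : ℕ) (μ : ℂ) : Continuous (deformedA m k μ) := by
  refine Continuous.matrix_fromBlocks ?_ continuous_const continuous_const continuous_const
  refine continuous_matrix fun i j => ?_
  simp only [deformedF, of_apply]
  split_ifs <;> fun_prop

theorem deformedA_zero_submatrix (j k : ℕ) (μ : ℂ) :
    (deformedA (j + 1) k μ 0).submatrix (moveFirst j k) (moveFirst (j + 1) k) =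
      fromBlocks (Fmat j) 0 0 (Jmat (k + 1) μ) := by
  ext a b
  rcases a with a | a <;> rcases b with b | b
  · simp [deformedA, moveFirst, deformedF, Fmat]
  · cases b using Fin.cases <;> simp [deformedA, moveFirst, deformedF, corner]
  · cases a using Fin.cases <;> simp [deformedA, moveFirst, deformedF]
  · cases a using Fin.cases <;> cases b using Fin.cases <;>
      simp [deformedA, moveFirst, deformedF, corner, firstRow, Jmat]

theorem Gmat_one_submatrix (j k : ℕ) :
    (fromBlocks (Gmat (j + 1)) 0 0 (1 : Matrix (Fin k) (Fin k) ℂ)).submatrix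
        (moveFirst j k) (moveFirst (j + 1) k) =
      fromBlocks (Gmat j) 0 0 (1 : Matrix (Fin (k + 1)) (Fin (k + 1)) ℂ) := by
  ext a b
  rcases a with a | a <;> rcases b with b | b
  · simp [moveFirst, Gmat]
  · cases b using Fin.cases <;> simp [moveFirst, Gmat]
  · cases a using Fin.cases <;> simp [moveFirst, Gmat]
  · cases a using Fin.cases <;> cases b using Fin.cases <;>
      simp [moveFirst, Gmat, Matrix.one_apply, Fin.ext_iff]

/-- Lower bidiagonal matrix with unit diagonal and subdiagonal `-μ`, first row scaled by `ε`. -/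
def bidiag (n : ℕ) (μ ε : ℂ) : Matrix (Fin n) (Fin n) ℂ :=
  of fun i j => (if (i : ℕ) = 0 then ε else 1) *
    ((if (i : ℕ) = j then 1 else 0) - if (i : ℕ) = j + 1 then μ else 0)

theorem det_bidiag_ne_zero (n : ℕ) (μ : ℂ) {ε : ℂ} (hε : ε ≠ 0) : (bidiag n μ ε).det ≠ 0 := by
  rw [det_of_isLowerTriangular]
  · refine Finset.prod_ne_zero_iff.2 fun i _ => ?_
    by_cases hi : (i : ℕ) = 0 <;> simp [bidiag, hi, hε]
  · intro i j hij
    have hij : (i : ℕ) < j := hij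
    have h₁ : ¬ (i : ℕ) = j := by omega
    have h₂ : ¬ (i : ℕ) = j + 1 := by omega
    simp [bidiag, h₁, h₂]

theorem Gmat_mul_apply {m : ℕ} {c : Type*} (X : Matrix (Fin (m + 1)) c ℂ) (i : Fin m) (b : c) :
    (Gmat m * X) i b = X i.castSucc b := by
  rw [mul_apply, Finset.sum_eq_single i.castSucc] <;> simp +contextual [Gmat, Fin.ext_iff]

theorem deformedF_mul_apply {m : ℕ} {c : Type*} (μ ε : ℂ) (X : Matrix (Fin (m + 1)) c ℂ)
    (i : Fin m) (b : c) :
    (deformedF m μ ε * X) i b =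
      (if (i : ℕ) = 0 then ε else 1) * X i.succ b + if (i : ℕ) = 0 then μ * X 0 b else 0 := by
  simp only [mul_apply, deformedF, of_apply, add_mul, Finset.sum_add_distrib]
  congr 1
  · rw [Finset.sum_eq_single i.succ] <;> simp +contextual [Fin.ext_iff]
  · rw [Finset.sum_eq_single 0]
    · simp
    · intro x _ hx
      simp [Fin.val_ne_zero_iff.2 hx]
    · simp

theorem mul_Gmat_apply_castSucc {m : ℕ} {r : Type*} (X : Matrix r (Fin m) ℂ) (a : r) (i : Fin m) :
    (X * Gmat m) a i.castSucc = X a i := by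
  rw [mul_apply, Finset.sum_eq_single i] <;> simp +contextual [Gmat, Fin.ext_iff, eq_comm]

theorem mul_Gmat_apply_last {m : ℕ} {r : Type*} (X : Matrix r (Fin m) ℂ) (a : r) :
    (X * Gmat m) a (Fin.last m) = 0 := by
  rw [mul_apply, Finset.sum_eq_zero]
  intro i _
  simp [Gmat, i.2.ne']

theorem mul_Fmat_apply_succ {m : ℕ} {r : Type*} (X : Matrix r (Fin m) ℂ) (a : r) (i : Fin m) :
    (X * Fmat m) a i.succ = X a i := by
  rw [mul_apply, Finset.sum_eq_single i] <;> simp +contextual [Fmat, Fin.ext_iff, eq_comm]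

theorem mul_Fmat_apply_zero {m : ℕ} {r : Type*} (X : Matrix r (Fin m) ℂ) (a : r) :
    (X * Fmat m) a 0 = 0 := by
  rw [mul_apply, Finset.sum_eq_zero]
  simp [Fmat]

theorem Gmat_mul_bidiag (m : ℕ) (μ ε : ℂ) :
    Gmat m * bidiag (m + 1) μ ε = bidiag m μ ε * Gmat m := by
  ext a b
  rw [Gmat_mul_apply]
  cases b using Fin.lastCases with
  | last =>
    rw [mul_Gmat_apply_last]
    have h₁ : ¬ (a : ℕ) = m := by omega
    have h₂ : ¬ (a : ℕ) = m + 1 := by omega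
    simp [bidiag, h₁, h₂]
  | cast b => simp only [mul_Gmat_apply_castSucc, bidiag, of_apply, Fin.val_castSucc]

theorem deformedF_mul_bidiag (m : ℕ) (μ ε : ℂ) :
    deformedF m μ ε * bidiag (m + 1) μ ε = bidiag m μ ε * Fmat m := by
  ext a b
  rw [deformedF_mul_apply]
  cases b using Fin.cases with
  | zero =>
    rw [mul_Fmat_apply_zero]
    by_cases ha : (a : ℕ) = 0 <;> simp [bidiag, ha]
    ring
  | succ b =>
    rw [mul_Fmat_apply_succ]
    by_cases ha : (a : ℕ) = 0 <;> simp [bidiag, ha, eq_comm]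

/-- The rows `0, -c, -c J, -c J², …` with `c = (1, 0, …, 0)` and `J = J_k(μ)`. -/
def krylovRow (k : ℕ) (μ : ℂ) : ℕ → Fin k → ℂ
  | 0 => 0
  | n + 1 => -(firstRow k ᵥ* Jmat k μ ^ n)

/-- The matrix whose rows are the first `m` vectors `krylovRow k μ`. -/
def krylov (m k : ℕ) (μ : ℂ) : Matrix (Fin m) (Fin k) ℂ :=
  of fun i => krylovRow k μ i

theorem Gmat_mul_krylov (m k : ℕ) (μ : ℂ) : Gmat m * krylov (m + 1) k μ = krylov m k μ := by
  ext a b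
  simp [Gmat_mul_apply, krylov]

theorem deformedF_mul_krylov (m k : ℕ) (μ ε : ℂ) :
    deformedF m μ ε * krylov (m + 1) k μ + ε • corner m k = krylov m k μ * Jmat k μ := by
  ext ⟨a, ha⟩ b
  have hrow : krylov m k μ ⟨a, ha⟩ = krylovRow k μ a := rfl
  rw [mul_apply_eq_vecMul, hrow, Matrix.add_apply, deformedF_mul_apply]
  cases a with
  | zero => simp [krylov, krylovRow, corner]
  | succ n => simp [krylov, krylovRow, corner, pow_succ, neg_vecMul, vecMul_vecMul]

/-- For `ε ≠ 0`, the deformed pencil is strictly equivalent to `L_m ⊕ E_k(μ)`. -/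
theorem deformed_strictEquiv (m k : ℕ) (μ ε : ℂ) (hε : ε ≠ 0) :
    ∃ (L : Matrix (Fin m ⊕ Fin k) (Fin m ⊕ Fin k) ℂ)
      (R : Matrix (Fin (m + 1) ⊕ Fin k) (Fin (m + 1) ⊕ Fin k) ℂ),
      IsUnit L.det ∧ IsUnit R.det ∧
        deformedA m k μ ε * R = L * fromBlocks (Fmat m) 0 0 (Jmat k μ) ∧
        fromBlocks (Gmat m) 0 0 (1 : Matrix (Fin k) (Fin k) ℂ) * R =
          L * fromBlocks (Gmat m) 0 0 (1 : Matrix (Fin k) (Fin k) ℂ) := by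
  refine ⟨fromBlocks (bidiag m μ ε) (krylov m k μ) 0 (ε • 1),
    fromBlocks (bidiag (m + 1) μ ε) (krylov (m + 1) k μ) 0 (ε • 1), ?_, ?_, ?_, ?_⟩
  · simp [det_fromBlocks_zero₂₁, det_bidiag_ne_zero, hε]
  · simp [det_fromBlocks_zero₂₁, det_bidiag_ne_zero, hε]
  · simp [deformedA, fromBlocks_multiply, deformedF_mul_bidiag, deformedF_mul_krylov]
  · simp [fromBlocks_multiply, Gmat_mul_bidiag, Gmat_mul_krylov]

end Pencil

/-- **Rule 3 transition as an orbit closure inclusion**: for `j, k ≥ 0` and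
`μ ∈ ℂ`, `orbᶜ (M_j ⊕ H_{k+1}(μ)) ⊆ closure (orbᶜ (M_{j+1} ⊕ H_k(μ)))`. -/
theorem orbC_MH_subset_closure (j k : ℕ) (μ : ℂ) :
    Pencil.orbC (Pencil.cast (by omega) (by omega)
        (Pencil.dsum (Mblk j) (Hblk (k + 1) μ)) :
          Pencil (2 * j + 2 * k + 3) (2 * j + 2 * k + 3)) ⊆
      closure (Pencil.orbC (Pencil.cast (by omega) (by omega)
        (Pencil.dsum (Mblk (j + 1)) (Hblk k μ)) :
          Pencil (2 * j + 2 * k + 3) (2 * j + 2 * k + 3))) := by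
  have h₁ := Pencil.cast_dsum_skewPair (N := 2 * j + 2 * k + 3) (by omega) (Fmat j) (Gmat j)
    (Jmat (k + 1) μ) 1
  have h₂ := Pencil.cast_dsum_skewPair (N := 2 * j + 2 * k + 3) (by omega) (Fmat (j + 1))
    (Gmat (j + 1)) (Jmat k μ) 1
  unfold Mblk Hblk
  rw [h₁, h₂, ← Pencil.deformedA_zero_submatrix, ← Pencil.Gmat_one_submatrix]
  have key := Pencil.orbC_subset_closure_of_tendsto (N := 2 * j + 2 * k + 3)
    (Pencil.gather (by omega))
    ((Pencil.gather (by omega)).trans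
      ((Pencil.moveFirst j k).sumCongr (Pencil.moveFirst (j + 1) k)))
    (Pencil.continuous_deformedA (j + 1) k μ) continuous_const
    (Pencil.deformed_strictEquiv (j + 1) k μ)
  have hskew (X : Matrix (Fin (j + 1) ⊕ Fin k) (Fin (j + 1 + 1) ⊕ Fin k) ℂ) :
      Pencil.skewBlock (X.submatrix (Pencil.moveFirst j k) (Pencil.moveFirst (j + 1) k)) =
        (Pencil.skewBlock X).submatrix
          ((Pencil.moveFirst j k).sumCongr (Pencil.moveFirst (j + 1) k))
          ((Pencil.moveFirst j k).sumCongr (Pencil.moveFirst (j + 1) k)) := by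
    ext (a | a) (b | b) <;> rfl
  rw [hskew, hskew]
  exact key
end
end

section
/- Let μ_1, …, μ_t ∈ ℂ be pairwise distinct, let k_1, …, k_t be positive integers, and let p, q ≥ 0 be integers with p + q + 1 = k_1 + … + k_t. Then the congruence orbit of the skew-symmetric pencil M_p ⊕ M_q is contained in the closure of the congruence orbit of the skew-symmetric pencil H_{k_1}(μ_1) ⊕ … ⊕ H_{k_t}(μ_t) (both pencils have size 2(k_1+…+k_t) × 2(k_1+…+k_t)). -/
/-!
Basic framework: a complex `m × n` matrix pencil `A - λ B` is formalized as the
pair `(A, B)` of matrices.  We define strict equivalence, congruence,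
skew-symmetry, orbits, direct sums, and the cover relations for the orbit
closure hierarchies (in the Euclidean topology).
-/

open Matrix

noncomputable section

/-- Total size of a direct sum of `H`-blocks given by a list of pairs
`(μᵢ, kᵢ)`. -/
def hSize : List (ℂ × ℕ) → ℕ
  | [] => 0
  | x :: t => (x.2 + x.2) + hSize t

/-- The direct sum `H_{k₁}(μ₁) ⊕ ⋯ ⊕ H_{k_t}(μ_t)`. -/
def hSum : (l : List (ℂ × ℕ)) → Pencil (hSize l) (hSize l)
  | [] => (0, 0)
  | x :: t => Pencil.dsum (Hblk x.2 x.1) (hSum t)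


section Aux

open Polynomial

/-- Congruence of pairs of square matrices with possibly different index types. -/
def PairCongruent {ι κ : Type*} [Fintype ι] [Fintype κ] [DecidableEq ι] [DecidableEq κ]
    (P : Matrix ι ι ℂ × Matrix ι ι ℂ) (Q : Matrix κ κ ℂ × Matrix κ κ ℂ) : Prop :=
  ∃ (S : Matrix ι κ ℂ) (R : Matrix κ ι ℂ), S * R = 1 ∧ R * S = 1 ∧
    Sᵀ * P.1 * S = Q.1 ∧ Sᵀ * P.2 * S = Q.2

variable {ι κ ν ρ : Type*} [Fintype ι] [Fintype κ] [Fintype ν] [Fintype ρ]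
  [DecidableEq ι] [DecidableEq κ] [DecidableEq ν] [DecidableEq ρ]

theorem PairCongruent.trans {P : Matrix ι ι ℂ × Matrix ι ι ℂ} {Q : Matrix κ κ ℂ × Matrix κ κ ℂ}
    {T : Matrix ν ν ℂ × Matrix ν ν ℂ} (h₁ : PairCongruent P Q) (h₂ : PairCongruent Q T) :
    PairCongruent P T := by
  obtain ⟨S, R, h1, h2, h3, h4⟩ := h₁
  obtain ⟨S', R', h1', h2', h3', h4'⟩ := h₂
  refine ⟨S * S', R' * R, ?_, ?_, ?_, ?_⟩
  · calc S * S' * (R' * R) = S * (S' * R') * R := by simp only [Matrix.mul_assoc]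
      _ = 1 := by rw [h1', Matrix.mul_one, h1]
  · calc R' * R * (S * S') = R' * (R * S) * S' := by simp only [Matrix.mul_assoc]
      _ = 1 := by rw [h2, Matrix.mul_one, h2']
  · rw [← h3', ← h3]; simp only [Matrix.transpose_mul, Matrix.mul_assoc]
  · rw [← h4', ← h4]; simp only [Matrix.transpose_mul, Matrix.mul_assoc]

theorem PairCongruent.submatrix (A B : Matrix ι ι ℂ) (e : κ ≃ ι) :
    PairCongruent (A, B) (A.submatrix e e, B.submatrix e e) := by
  have key : ∀ M : Matrix ι ι ℂ, ((1 : Matrix ι ι ℂ).submatrix id e)ᵀ * M *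
      (1 : Matrix ι ι ℂ).submatrix id e = M.submatrix e e := fun M => by
    rw [Matrix.transpose_submatrix, Matrix.transpose_one]
    ext i j
    simp [Matrix.mul_apply, Matrix.one_apply]
  refine ⟨(1 : Matrix ι ι ℂ).submatrix id e, (1 : Matrix ι ι ℂ).submatrix e id, ?_, ?_,
    key A, key B⟩
  · rw [Matrix.submatrix_mul_equiv]; simp
  · ext i j
    simp [Matrix.mul_apply, Matrix.one_apply]

theorem PairCongruent.of_submatrix (A B : Matrix ι ι ℂ) (e : κ ≃ ι) :
    PairCongruent (A.submatrix e e, B.submatrix e e) (A, B) := by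
  simpa using PairCongruent.submatrix (A.submatrix e e) (B.submatrix e e) e.symm

theorem PairCongruent.fromBlocks {P : Matrix ι ι ℂ × Matrix ι ι ℂ}
    {P' : Matrix κ κ ℂ × Matrix κ κ ℂ} {Q : Matrix ν ν ℂ × Matrix ν ν ℂ}
    {Q' : Matrix ρ ρ ℂ × Matrix ρ ρ ℂ} (h₁ : PairCongruent P P') (h₂ : PairCongruent Q Q') :
    PairCongruent (fromBlocks P.1 0 0 Q.1, fromBlocks P.2 0 0 Q.2)
      (fromBlocks P'.1 0 0 Q'.1, fromBlocks P'.2 0 0 Q'.2) := by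
  obtain ⟨S, R, h1, h2, h3, h4⟩ := h₁
  obtain ⟨S', R', h1', h2', h3', h4'⟩ := h₂
  refine ⟨Matrix.fromBlocks S 0 0 S', Matrix.fromBlocks R 0 0 R', ?_, ?_, ?_, ?_⟩ <;>
    simp [fromBlocks_multiply, fromBlocks_transpose, *]

theorem PairCongruent.congruent {n : ℕ} {P Q : Pencil n n} (h : PairCongruent P Q) :
    Pencil.Congruent P Q := by
  obtain ⟨S, R, h1, h2, h3, h4⟩ := h
  exact ⟨S, ⟨⟨S, R, h1, h2⟩, rfl⟩, h3, h4⟩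

/-- The skew-symmetric block matrix `[[0, X], [-Xᵀ, 0]]`, indexed by a sum type. -/
def skewBlock {α β : Type*} (X : Matrix α β ℂ) : Matrix (α ⊕ β) (α ⊕ β) ℂ :=
  fromBlocks 0 X (-Xᵀ) 0

theorem pairCongruent_skewBlock (X Y : Matrix ι κ ℂ) {P : Matrix ν ι ℂ} {P' : Matrix ι ν ℂ}
    {Q : Matrix κ ρ ℂ} {Q' : Matrix ρ κ ℂ} (hP : P * P' = 1) (hP' : P' * P = 1)
    (hQ : Q * Q' = 1) (hQ' : Q' * Q = 1) :
    PairCongruent (skewBlock X, skewBlock Y)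
      (skewBlock (P * X * Q), skewBlock (P * Y * Q)) := by
  have e1 : Pᵀ * P'ᵀ = 1 := by rw [← Matrix.transpose_mul, hP', Matrix.transpose_one]
  have e2 : P'ᵀ * Pᵀ = 1 := by rw [← Matrix.transpose_mul, hP, Matrix.transpose_one]
  refine ⟨Matrix.fromBlocks Pᵀ 0 0 Q, Matrix.fromBlocks P'ᵀ 0 0 Q', ?_, ?_, ?_, ?_⟩ <;>
    simp [skewBlock, fromBlocks_multiply, fromBlocks_transpose, Matrix.mul_assoc, *]

theorem fromBlocks_smul_mul_fromBlocks_inv_smul {ε : ℂ} (hε : ε ≠ 0) :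
    (fromBlocks 1 0 0 (ε • 1) : Matrix (ι ⊕ κ) (ι ⊕ κ) ℂ) * fromBlocks 1 0 0 (ε⁻¹ • 1) = 1 ∧
    (fromBlocks 1 0 0 (ε⁻¹ • 1) : Matrix (ι ⊕ κ) (ι ⊕ κ) ℂ) * fromBlocks 1 0 0 (ε • 1) = 1 := by
  constructor <;> simp [fromBlocks_multiply, smul_smul, hε]

theorem skewBlock_fromBlocks {α β γ δ : Type*} (X : Matrix α β ℂ) (Y : Matrix γ δ ℂ) :
    fromBlocks (skewBlock X) 0 0 (skewBlock Y) =
      (skewBlock (fromBlocks X 0 0 Y)).submatrix (Equiv.sumSumSumComm α β γ δ)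
        (Equiv.sumSumSumComm α β γ δ) := by
  ext i j
  rcases i with (i | i) | (i | i) <;> rcases j with (j | j) | (j | j) <;> simp [skewBlock]

/-- `e` is a cyclic vector of the square matrix `N`. -/
def IsCyclicVector (N : Matrix ι ι ℂ) (e : ι → ℂ) : Prop :=
  ∀ v : ι → ℂ, ∃ g : ℂ[X], aeval N g *ᵥ e = v

theorem Jmat_sub_pow_mulVec (k : ℕ) (μ : ℂ) (m : ℕ) (v : Fin k → ℂ) (i : Fin k) :
    ((Jmat k μ - algebraMap ℂ _ μ) ^ m *ᵥ v) i =
      if h : (i : ℕ) + m < k then v ⟨i + m, h⟩ else 0 := by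
  have one : ∀ (w : Fin k → ℂ) (i : Fin k), ((Jmat k μ - algebraMap ℂ _ μ) *ᵥ w) i =
      if h : (i : ℕ) + 1 < k then w ⟨i + 1, h⟩ else 0 := by
    intro w i
    have ent : ∀ j : Fin k, (Jmat k μ - algebraMap ℂ _ μ) i j =
        if (j : ℕ) = i + 1 then 1 else 0 := by
      intro j
      rw [Matrix.sub_apply, Matrix.algebraMap_matrix_apply]
      by_cases hij : i = j
      · subst hij; simp [Jmat]
      · have : (j : ℕ) ≠ i := fun h => hij (Fin.ext h.symm)
        simp [Jmat, hij, this]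
    simp only [mulVec, dotProduct, ent]
    split_ifs with h
    · rw [Finset.sum_eq_single ⟨i + 1, h⟩]
      · simp
      · intro j _ hj
        rw [if_neg (fun h' => hj (Fin.ext h')), zero_mul]
      · simp
    · refine Finset.sum_eq_zero fun j _ => ?_
      rw [if_neg (by have := j.2; omega), zero_mul]
  induction m generalizing v i with
  | zero => simp
  | succ m ih =>
    rw [pow_succ', ← mulVec_mulVec, one]
    by_cases h : (i : ℕ) + 1 < k
    · rw [dif_pos h, ih]
      simp only [add_assoc, add_comm 1 m]
    · rw [dif_neg h, dif_neg (by omega)]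

theorem Jmat_sub_pow_self (k : ℕ) (μ : ℂ) :
    aeval (Jmat k μ) ((X - C μ) ^ k) = 0 := by
  refine Matrix.ext_of_mulVec_single fun j => ?_
  ext i
  simp only [map_pow, map_sub, aeval_X, aeval_C]
  rw [Jmat_sub_pow_mulVec, dif_neg (by omega)]
  simp

theorem isCyclicVector_Jmat (k : ℕ) (μ : ℂ) :
    IsCyclicVector (Jmat k μ) (fun i => if (i : ℕ) + 1 = k then 1 else 0) := by
  intro v
  refine ⟨∑ i : Fin k, C (v i) * (X - C μ) ^ (k - 1 - (i : ℕ)), ?_⟩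
  ext r
  simp only [map_sum, map_mul, map_pow, map_sub, aeval_X, aeval_C, Matrix.sum_mulVec,
    Finset.sum_apply, ← Algebra.smul_def, Matrix.smul_mulVec, Pi.smul_apply, smul_eq_mul,
    Jmat_sub_pow_mulVec]
  rw [Finset.sum_eq_single r]
  · have := r.2
    rw [dif_pos (by omega), if_pos (by omega), mul_one]
  · intro j _ hj
    have : (j : ℕ) ≠ r := fun h => hj (Fin.ext h)
    have := j.2
    split_ifs with h1 h2
    · omega
    · simp
    · simp
  · simp

theorem aeval_fromBlocks_diagonal (A : Matrix ι ι ℂ) (B : Matrix κ κ ℂ) (g : ℂ[X]) :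
    aeval (fromBlocks A 0 0 B) g = fromBlocks (aeval A g) 0 0 (aeval B g) := by
  induction g using Polynomial.induction_on' with
  | add p q hp hq => simp [hp, hq, fromBlocks_add]
  | monomial n a =>
    simp [aeval_monomial, fromBlocks_diagonal_pow, ← Algebra.smul_def, fromBlocks_smul]

theorem IsCyclicVector.fromBlocks {A : Matrix ι ι ℂ} {B : Matrix κ κ ℂ} {a : ι → ℂ} {b : κ → ℂ}
    (ha : IsCyclicVector A a) (hb : IsCyclicVector B b) {f₁ f₂ : ℂ[X]} (h₁ : aeval A f₁ = 0)
    (h₂ : aeval B f₂ = 0) (hc : IsCoprime f₁ f₂) :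
    IsCyclicVector (fromBlocks A 0 0 B) (Sum.elim a b) := by
  intro v
  obtain ⟨u, w, huw⟩ := hc
  obtain ⟨g₁, hg₁⟩ := ha (v ∘ Sum.inl)
  obtain ⟨g₂, hg₂⟩ := hb (v ∘ Sum.inr)
  have e1 : aeval A (w * f₂) = 1 := by
    have := congrArg (aeval A) huw
    simpa [h₁] using this
  have e2 : aeval B (u * f₁) = 1 := by
    have := congrArg (aeval B) huw
    simpa [h₂] using this
  refine ⟨g₁ * (w * f₂) + g₂ * (u * f₁), ?_⟩
  have e3 : aeval A (g₁ * (w * f₂) + g₂ * (u * f₁)) = aeval A g₁ := by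
    rw [map_add, map_mul, e1]; simp [h₁]
  have e4 : aeval B (g₁ * (w * f₂) + g₂ * (u * f₁)) = aeval B g₂ := by
    rw [map_add, map_mul _ g₂, e2]; simp [h₂]
  rw [aeval_fromBlocks_diagonal, e3, e4, fromBlocks_mulVec]
  simp [hg₁, hg₂]

/-- A direct sum of blocks `H_k(μ)` with distinct `μ` is congruent to the skew-symmetric pair
built from a matrix with a cyclic vector. -/
theorem exists_cyclic_pairCongruent_hSum (l : List (ℂ × ℕ)) (hdist : (l.map Prod.fst).Nodup) :
    ∃ (ι : Type) (_ : Fintype ι) (_ : DecidableEq ι) (N : Matrix ι ι ℂ) (e : ι → ℂ),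
      Fintype.card ι = (l.map Prod.snd).sum ∧ IsCyclicVector N e ∧
      aeval N (l.map fun x => (X - C x.1) ^ x.2).prod = 0 ∧
      PairCongruent (hSum l) (skewBlock N, skewBlock 1) := by
  induction l with
  | nil =>
    refine ⟨Fin 0, inferInstance, inferInstance, 1, 0, by simp,
      fun v => ⟨0, Subsingleton.elim _ _⟩, Subsingleton.elim _ _, ?_⟩
    have h : ∀ A : Matrix (Fin 0 ⊕ Fin 0) (Fin 0 ⊕ Fin 0) ℂ,
        (0 : Matrix (Fin 0) (Fin 0) ℂ).submatrix (Equiv.equivOfIsEmpty _ _)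
          (Equiv.equivOfIsEmpty _ _) = A :=
      fun A => by ext i; exact isEmptyElim i
    have := PairCongruent.submatrix (0 : Matrix (Fin 0) (Fin 0) ℂ) 0
      (Equiv.equivOfIsEmpty (Fin 0 ⊕ Fin 0) (Fin 0))
    rwa [h (skewBlock 1)] at this
  | cons x t ih =>
    obtain ⟨μ, k⟩ := x
    rw [List.map_cons, List.nodup_cons] at hdist
    obtain ⟨ι, _, _, N, e, hcard, hcyc, hann, hcong⟩ := ih hdist.2
    refine ⟨Fin k ⊕ ι, inferInstance, inferInstance, fromBlocks (Jmat k μ) 0 0 N,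
      Sum.elim _ e, by simp [hcard], (isCyclicVector_Jmat k μ).fromBlocks hcyc
        (Jmat_sub_pow_self k μ) hann ?_, ?_, ?_⟩
    · refine List.prod_induction _ (fun _ _ => IsCoprime.mul_right) isCoprime_one_right ?_
      intro f hf
      obtain ⟨y, hy, rfl⟩ := List.mem_map.1 hf
      refine IsCoprime.pow (Polynomial.isCoprime_X_sub_C_of_isUnit_sub ?_)
      refine IsUnit.mk0 _ (sub_ne_zero.2 fun h => hdist.1 ?_)
      exact List.mem_map.2 ⟨y, hy, h.symm⟩
    · rw [List.map_cons, List.prod_cons, aeval_fromBlocks_diagonal, map_mul, map_mul, hann,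
        Jmat_sub_pow_self]
      simp
    · have hJ : PairCongruent (Hblk k μ) (skewBlock (Jmat k μ), skewBlock 1) :=
        PairCongruent.of_submatrix (skewBlock (Jmat k μ)) (skewBlock 1) finSumFinEquiv.symm
      have h := hJ.fromBlocks hcong
      simp only [skewBlock_fromBlocks, fromBlocks_one] at h
      exact ((PairCongruent.of_submatrix _ _ finSumFinEquiv.symm).trans h).trans
        (PairCongruent.of_submatrix _ _ _)

theorem exists_inverse_of_span_eq_top (hcard : Fintype.card κ = Fintype.card ι)
    (v : κ → ι → ℂ) (hv : Submodule.span ℂ (Set.range v) = ⊤) :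
    ∃ R : Matrix κ ι ℂ, (Matrix.of v)ᵀ * R = 1 ∧ R * (Matrix.of v)ᵀ = 1 := by
  have h : ∀ i : ι, ∃ c : κ → ℂ, ∑ k, c k • v k = Pi.single i 1 := fun i =>
    Submodule.mem_span_range_iff_exists_fun ℂ |>.1 (hv ▸ Submodule.mem_top)
  choose c hc using h
  have h1 : (Matrix.of v)ᵀ * (Matrix.of c)ᵀ = 1 := by
    ext r i
    have := congrFun (hc i) r
    simp only [Finset.sum_apply, Pi.smul_apply, smul_eq_mul, Pi.single_apply] at this
    simp only [Matrix.mul_apply, transpose_apply, of_apply, Matrix.one_apply]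
    rw [← this]
    exact Finset.sum_congr rfl fun _ _ => mul_comm _ _
  exact ⟨_, h1, (Matrix.mul_eq_one_comm_of_card_eq _ _ _ hcard.symm).1 h1⟩

/-- Horner sums: `horner c w q n i = ∑ k ≤ i, c (n - k) • w (q + i - k)`. -/
def horner {V : Type*} [AddCommGroup V] [Module ℂ V] (c : ℕ → ℂ) (w : ℕ → V) (q n i : ℕ) : V :=
  ∑ k ∈ Finset.range (i + 1), c (n - k) • w (q + i - k)

theorem mem_of_horner_mem {V : Type*} [AddCommGroup V] [Module ℂ V] {c : ℕ → ℂ} {w : ℕ → V}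
    {q n p : ℕ} (hc : c n = 1) (U : Submodule ℂ V) (hlow : ∀ i ≤ q, w i ∈ U)
    (hU : ∀ i ≤ p, horner c w q n i ∈ U) (i : ℕ) (hi : i ≤ q + p) : w i ∈ U := by
  induction i using Nat.strong_induction_on with
  | _ i ih =>
    by_cases hiq : i ≤ q
    · exact hlow i hiq
    · obtain ⟨j, rfl⟩ := Nat.exists_eq_add_of_le (le_of_not_ge hiq)
      have h := hU j (by omega)
      rw [horner, Finset.sum_range_succ', Nat.sub_zero, Nat.sub_zero, hc, one_smul] at h
      refine (Submodule.add_mem_iff_right U (Submodule.sum_mem U fun k hk => ?_)).1 h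
      refine U.smul_mem _ (ih _ ?_ ?_) <;> simp only [Finset.mem_range] at hk <;> omega

theorem mulVec_horner (N : Matrix ι ι ℂ) (e : ι → ℂ) (c : ℕ → ℂ) (q n i : ℕ) :
    N *ᵥ horner c (fun m => N ^ m *ᵥ e) q n i =
      ∑ k ∈ Finset.range (i + 1), c (n - k) • (N ^ (q + (i + 1) - k) *ᵥ e) := by
  rw [horner, Matrix.mulVec_sum]
  refine Finset.sum_congr rfl fun k hk => ?_
  rw [Matrix.mulVec_smul, mulVec_mulVec, ← pow_succ']
  have := Finset.mem_range.1 hk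
  rw [show q + i - k + 1 = q + (i + 1) - k by omega]

theorem horner_succ (N : Matrix ι ι ℂ) (e : ι → ℂ) (c : ℕ → ℂ) (q n i : ℕ) :
    horner c (fun m => N ^ m *ᵥ e) q n (i + 1) =
      N *ᵥ horner c (fun m => N ^ m *ᵥ e) q n i + c (n - (i + 1)) • (N ^ q *ᵥ e) := by
  rw [mulVec_horner, horner, Finset.sum_range_succ _ (i + 1)]
  simp

/-- A square matrix of size `p + q + 1` with a cyclic vector is, as a pencil, strictly equivalent
to the pencil obtained from `L_p ⊕ -L_qᵀ` by filling in its zero lower-left block. -/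
theorem exists_strictEquiv_of_isCyclicVector {N : Matrix ι ι ℂ} {e : ι → ℂ}
    (hcyc : IsCyclicVector N e) (p q : ℕ) (hcard : Fintype.card ι = p + q + 1) :
    ∃ (B : Matrix ι (Fin p ⊕ Fin (q + 1)) ℂ) (B' : Matrix (Fin p ⊕ Fin (q + 1)) ι ℂ)
      (Q : Matrix ι (Fin (p + 1) ⊕ Fin q) ℂ) (Q' : Matrix (Fin (p + 1) ⊕ Fin q) ι ℂ)
      (Y Z : Matrix (Fin (q + 1)) (Fin (p + 1)) ℂ),
      B * B' = 1 ∧ B' * B = 1 ∧ Q * Q' = 1 ∧ Q' * Q = 1 ∧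
      N * Q = B * fromBlocks (Fmat p) 0 Y (-(Fmat q)ᵀ) ∧
      Q = B * fromBlocks (Gmat p) 0 Z (-(Gmat q)ᵀ) := by
  set n := p + q + 1 with hn
  set c : ℕ → ℂ := N.charpoly.coeff
  set w : ℕ → ι → ℂ := fun m => N ^ m *ᵥ e with hw
  set h : ℕ → ι → ℂ := horner c w q n with hh
  have hdeg : N.charpoly.natDegree = n := by rw [charpoly_natDegree_eq_dim, hcard]
  have hcn : c n = 1 := by
    have := N.charpoly_monic.coeff_natDegree
    rwa [hdeg] at this
  have h0 : h 0 = w q := by simp [hh, horner, hcn]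
  have hsucc : ∀ i, h (i + 1) = N *ᵥ h i + c (n - (i + 1)) • w q := horner_succ N e c q n
  have hwsucc : ∀ i, N *ᵥ w i = w (i + 1) := fun i => by
    simp only [hw]; rw [mulVec_mulVec, ← pow_succ']
  have hlast : N *ᵥ h p = ∑ i : Fin (q + 1), (-c i) • w i := by
    have hCH : ∑ i ∈ Finset.range (n + 1), c i • w i = 0 := by
      have := congrArg (· *ᵥ e) N.aeval_self_charpoly
      simp only [aeval_eq_sum_range, hdeg, Matrix.sum_mulVec, Matrix.smul_mulVec,
        Matrix.zero_mulVec] at this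
      exact this
    rw [show N *ᵥ h p = _ from mulVec_horner N e c q n p, Fin.sum_univ_eq_sum_range
      (fun i : ℕ => (-c i) • w i)]
    simp only [neg_smul, Finset.sum_neg_distrib]
    rw [eq_neg_iff_add_eq_zero, add_comm, ← hCH, show n + 1 = (q + 1) + (p + 1) by omega,
      Finset.sum_range_add _ (q + 1) (p + 1),
      ← Finset.sum_range_reflect (fun k => c (n - k) • (N ^ (q + (p + 1) - k) *ᵥ e)) (p + 1)]
    refine congrArg (_ + ·) (Finset.sum_congr rfl fun k hk => ?_)
    have := Finset.mem_range.1 hk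
    simp only [hw]
    congr 2 <;> congr 1 <;> omega
  have htop : ∀ U : Submodule ℂ (ι → ℂ), (∀ i ≤ q, w i ∈ U) → (∀ i ≤ p, h i ∈ U) → U = ⊤ := by
    intro U h1 h2
    have h3 := mem_of_horner_mem hcn U h1 h2
    refine eq_top_iff.2 fun v _ => ?_
    obtain ⟨g, rfl⟩ := hcyc v
    rw [← aeval_modByMonic_eq_self_of_root N.aeval_self_charpoly, aeval_eq_sum_range,
      Matrix.sum_mulVec]
    refine U.sum_mem fun i hi => ?_
    rw [Matrix.smul_mulVec]
    refine U.smul_mem _ (h3 i ?_)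
    have := natDegree_modByMonic_lt g N.charpoly_monic (by
      intro h1; rw [h1, natDegree_one] at hdeg; omega)
    have := Finset.mem_range.1 hi
    omega
  let b : Fin p ⊕ Fin (q + 1) → ι → ℂ :=
    Sum.elim (fun i => N *ᵥ h (p - 1 - i)) (fun j => w j)
  let a : Fin (p + 1) ⊕ Fin q → ι → ℂ := Sum.elim (fun i => h (p - i)) (fun j => -w j)
  have hb : Submodule.span ℂ (Set.range b) = ⊤ := by
    have hlow : ∀ i ≤ q, w i ∈ Submodule.span ℂ (Set.range b) := fun i hi =>
      Submodule.subset_span ⟨Sum.inr ⟨i, by omega⟩, rfl⟩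
    refine htop _ hlow fun i hi => ?_
    cases i with
    | zero => rw [h0]; exact hlow q le_rfl
    | succ i =>
      rw [hsucc]
      refine add_mem (Submodule.subset_span ⟨Sum.inl ⟨p - 1 - i, by omega⟩, ?_⟩)
        (Submodule.smul_mem _ _ (hlow q le_rfl))
      simp only [b, Sum.elim_inl]
      rw [show p - 1 - (p - 1 - i) = i by omega]
  have ha : Submodule.span ℂ (Set.range a) = ⊤ := by
    have hh : ∀ i ≤ p, h i ∈ Submodule.span ℂ (Set.range a) := fun i hi =>
      Submodule.subset_span ⟨Sum.inl ⟨p - i, by omega⟩, by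
        simp only [a, Sum.elim_inl]; rw [Nat.sub_sub_self hi]⟩
    refine htop _ (fun i hi => ?_) hh
    rcases hi.eq_or_lt with rfl | hi
    · rw [← h0]; exact hh 0 (Nat.zero_le p)
    · rw [← neg_neg (w i)]
      exact neg_mem (Submodule.subset_span ⟨Sum.inr ⟨i, hi⟩, rfl⟩)
  obtain ⟨B', hB, hB'⟩ := exists_inverse_of_span_eq_top (by simp [hcard, hn]; omega) b hb
  obtain ⟨Q', hQ, hQ'⟩ := exists_inverse_of_span_eq_top (by simp [hcard, hn]; omega) a ha
  have colA : ∀ r k, (N * (of a)ᵀ) r k = (N *ᵥ a k) r := fun _ _ => rfl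
  have colB : ∀ (X : Matrix (Fin p ⊕ Fin (q + 1)) (Fin (p + 1) ⊕ Fin q) ℂ) r k,
      ((of b)ᵀ * X) r k =
        (∑ i, X (Sum.inl i) k • b (Sum.inl i) + ∑ i, X (Sum.inr i) k • b (Sum.inr i)) r := by
    intro X r k
    simp [Matrix.mul_apply, mul_comm]
  refine ⟨_, B', _, Q', of fun i j => if j = 0 then -c i else 0,
    of fun i j => if i = Fin.last q then c (q + 1 + j) else 0,
    hB, hB', hQ, hQ', ?_, ?_⟩
  · ext r (j | j)
    · rw [colA, colB]
      refine Fin.cases ?_ (fun j => ?_) j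
      · simp [a, b, Fmat, hlast]
      · have := j.2
        simp [a, b, Fmat, Fin.val_inj, Nat.sub_sub, add_comm]
    · rw [colA, colB]
      simp only [fromBlocks_apply₁₂, fromBlocks_apply₂₂, a, b, Sum.elim_inl, Sum.elim_inr,
        Matrix.zero_apply, zero_smul, Finset.sum_const_zero, zero_add]
      rw [Finset.sum_eq_single j.succ]
      · simp [Fmat, Matrix.mulVec_neg, hwsucc]
      · intro i _ hi
        have : (i : ℕ) ≠ j + 1 := fun h => hi (Fin.ext h)
        simp [Fmat, this]
      · simp
  · ext r (j | j)
    · rw [colB]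
      change a (Sum.inl j) r = _
      refine Fin.lastCases ?_ (fun j => ?_) j
      · have hG : ∀ i : Fin p, p ≠ (i : ℕ) := fun i => i.2.ne'
        simp [a, b, Gmat, hG, h0, show q + 1 + p = n by omega, hcn]
      · have hj : p - j = (p - 1 - j) + 1 := by have := j.2; omega
        simp [a, b, Gmat, Fin.val_inj, hj, hsucc,
          show n - (p - 1 - j + 1) = q + 1 + (j : ℕ) by have := j.2; omega]
    · rw [colB]
      change a (Sum.inr j) r = _
      simp only [fromBlocks_apply₁₂, fromBlocks_apply₂₂, a, b, Sum.elim_inl, Sum.elim_inr,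
        Matrix.zero_apply, zero_smul, Finset.sum_const_zero, zero_add]
      rw [Finset.sum_eq_single j.castSucc]
      · simp [Gmat]
      · intro i _ hi
        have : (i : ℕ) ≠ j := fun h => hi (Fin.ext h)
        simp [Gmat, this]
      · simp

end Aux
/-- **Rule 4 transition as an orbit closure inclusion**: for pairwise distinct
`μ₁, …, μ_t ∈ ℂ`, positive `k₁, …, k_t` and `p + q + 1 = k₁ + ⋯ + k_t`,
`orbᶜ (M_p ⊕ M_q) ⊆ closure (orbᶜ (H_{k₁}(μ₁) ⊕ ⋯ ⊕ H_{k_t}(μ_t)))`. -/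
theorem orbC_M_pair_subset_closure_H_sum (l : List (ℂ × ℕ))
    (hdist : (l.map Prod.fst).Nodup) (hpos : ∀ x ∈ l, 1 ≤ x.2) (p q : ℕ)
    (hpq : p + q + 1 = (l.map Prod.snd).sum)
    (hcast : p + (p + 1) + (q + (q + 1)) = hSize l) :
    Pencil.orbC (Pencil.cast hcast hcast (Pencil.dsum (Mblk p) (Mblk q))) ⊆
      closure (Pencil.orbC (hSum l)) := by
  obtain ⟨ι, _, _, N, e, hcard, hcyc, -, hcong⟩ := exists_cyclic_pairCongruent_hSum l hdist
  obtain ⟨B, B', Q, Q', Y, Z, hB, hB', hQ, hQ', hA, hG⟩ :=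
    exists_strictEquiv_of_isCyclicVector hcyc p q (hcard.trans hpq.symm)
  have hA' : B' * N * Q = fromBlocks (Fmat p) 0 Y (-(Fmat q)ᵀ) := by
    rw [Matrix.mul_assoc, hA, ← Matrix.mul_assoc, hB', Matrix.one_mul]
  have hG' : B' * (1 : Matrix ι ι ℂ) * Q = fromBlocks (Gmat p) 0 Z (-(Gmat q)ᵀ) := by
    rw [Matrix.mul_one, hG, ← Matrix.mul_assoc, hB', Matrix.one_mul]
  let τ : Fin (hSize l) ≃ (Fin p ⊕ Fin (q + 1)) ⊕ (Fin (p + 1) ⊕ Fin q) :=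
    (finCongr hcast.symm).trans <| finSumFinEquiv.symm.trans <|
      (Equiv.sumCongr finSumFinEquiv.symm
        (finSumFinEquiv.symm.trans (Equiv.sumComm _ _))).trans (Equiv.sumSumSumComm _ _ _ _)
  let D (A : Matrix (Fin p) (Fin (p + 1)) ℂ) (Y : Matrix (Fin (q + 1)) (Fin (p + 1)) ℂ)
      (C : Matrix (Fin q) (Fin (q + 1)) ℂ) (ε : ℂ) : Matrix (Fin (hSize l)) (Fin (hSize l)) ℂ :=
    (skewBlock (fromBlocks A 0 (ε • Y) (-Cᵀ))).submatrix τ τ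
  have hε : ∀ ε : ℂ, ε ≠ 0 →
      PairCongruent (hSum l) (D (Fmat p) Y (Fmat q) ε, D (Gmat p) Z (Gmat q) ε) := by
    intro ε hε
    have h := hcong.trans (pairCongruent_skewBlock N 1 hB' hB hQ hQ')
    rw [hA', hG'] at h
    have hL := fromBlocks_smul_mul_fromBlocks_inv_smul (ι := Fin p) (κ := Fin (q + 1)) hε
    have hR := fromBlocks_smul_mul_fromBlocks_inv_smul (ι := Fin (p + 1)) (κ := Fin q) hε
    have h2 := h.trans (pairCongruent_skewBlock _ _ hL.1 hL.2 hR.2 hR.1)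
    simp only [fromBlocks_multiply, Matrix.one_mul, Matrix.mul_one, Matrix.zero_mul,
      Matrix.mul_zero, add_zero, zero_add, Matrix.smul_mul, Matrix.mul_smul, smul_smul,
      inv_mul_cancel₀ hε, one_smul, smul_zero] at h2
    exact h2.trans (PairCongruent.submatrix _ _ τ)
  have hD0 : Pencil.cast hcast hcast (Pencil.dsum (Mblk p) (Mblk q)) =
      (D (Fmat p) Y (Fmat q) 0, D (Gmat p) Z (Gmat q) 0) := by
    have key : ∀ (A : Matrix (Fin p) (Fin (p + 1)) ℂ) (Y : Matrix (Fin (q + 1)) (Fin (p + 1)) ℂ)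
        (C : Matrix (Fin q) (Fin (q + 1)) ℂ),
        ((fromBlocks (skewPair A) 0 0 (skewPair C)).submatrix finSumFinEquiv.symm
          finSumFinEquiv.symm).submatrix (finCongr hcast.symm) (finCongr hcast.symm) =
        D A Y C 0 := by
      intro A Y C
      ext i j
      simp only [D, τ, submatrix_apply, Equiv.trans_apply]
      generalize finSumFinEquiv.symm (finCongr hcast.symm i) = i'
      generalize finSumFinEquiv.symm (finCongr hcast.symm j) = j'
      rcases i' with i' | i' <;> rcases j' with j' | j' <;>
        simp only [skewPair, submatrix_apply, fromBlocks_apply₁₁, fromBlocks_apply₁₂,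
          fromBlocks_apply₂₁, fromBlocks_apply₂₂, Equiv.sumCongr_apply, Sum.map_inl, Sum.map_inr,
          Equiv.trans_apply] <;>
        generalize finSumFinEquiv.symm i' = i'' <;> generalize finSumFinEquiv.symm j' = j'' <;>
        rcases i'' with i'' | i'' <;> rcases j'' with j'' | j'' <;> simp [skewBlock]
    exact Prod.ext (key _ _ _) (key _ _ _)
  rintro T ⟨S, hS, hS1, hS2⟩
  let Φ : ℂ → Pencil (hSize l) (hSize l) := fun ε =>
    (Sᵀ * D (Fmat p) Y (Fmat q) ε * S, Sᵀ * D (Gmat p) Z (Gmat q) ε * S)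
  have hT : Φ 0 = T := by
    rw [hD0] at hS1 hS2
    exact Prod.ext hS1 hS2
  have hDc : ∀ A Y C, Continuous (D A Y C) := fun A Y C =>
    (Continuous.matrix_fromBlocks continuous_const
      (continuous_const.matrix_fromBlocks continuous_const (continuous_id.smul continuous_const)
        continuous_const)
      (Continuous.matrix_transpose (continuous_const.matrix_fromBlocks continuous_const
        (continuous_id.smul continuous_const) continuous_const)).neg
      continuous_const).matrix_submatrix τ τ
  have hΦ : Continuous Φ :=
    ((continuous_const.matrix_mul (hDc _ _ _)).matrix_mul continuous_const).prodMk
      ((continuous_const.matrix_mul (hDc _ _ _)).matrix_mul continuous_const)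
  rw [← hT]
  refine mem_closure_of_tendsto (hΦ.continuousWithinAt (s := {0}ᶜ) (x := 0)) ?_
  filter_upwards [self_mem_nhdsWithin] with ε hε0
  obtain ⟨⟨S, R, h1, h2⟩, rfl⟩ := hS
  exact ((hε ε hε0).trans ⟨S, R, h1, h2, rfl, rfl⟩).congruent
end
end
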